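/- arXiv:1212.5694 — 3 statements merged into one kernel-verified Lean document; each statement's English description precedes it below -/
import Mathlib

section
/- Let R be a commutative ring and X = X_1 × ⋯ × X_n a d-grid such that N(x) is a unit in R for every x ∈ X (e.g. any grid over a field). Let P ∈ R[X_1,…,X_n] and let ε be a d-leading multiindex of P, i.e. ε_j ≤ d_j for all j and every monomial X^δ occurring in P (coefficient ≠ 0) satisfies either δ = ε, or there is some j with δ_j ≠ ε_j and δ_j ≤ d_j. Then the coefficient of X^ε in P equals Σ_{x ∈ X} ψ_{ε,x} · N(x)^{−1} · P(x). -/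
open MvPolynomial Finset

/-!
Pairwise unit differences make Lagrange interpolation work over any commutative ring: if
`L_a` are the Lagrange basis polynomials of the nodes `S`, then `p = ∑_{a ∈ S} p(a) L_a` as soon as
`deg p < |S|`, and comparing coefficients writes `p_e` as `∑_{a ∈ S} (L_a)_e p(a)`. By Vieta,
`(L_a)_e` is the one-dimensional factor of `ψ_{ε,x} N(x)⁻¹`.

The product of these functionals over the coordinates sends a monomial `X^δ` to the product over
`j` of the one-dimensional sums. This is `1` if `δ = ε`, and it is `0` if `δ_j ≠ ε_j` and
`δ_j ≤ d_j` for some `j`. A `d`-leading `ε` leaves no other monomials.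
-/

section Interpolation

variable {R ι : Type*} [CommRing R] {s : Finset ι} {v : ι → R}

theorem nodal_dvd_of_pairwise_isUnit_sub
    (hs : (s : Set ι).Pairwise fun i j => IsUnit (v i - v j)) {p : Polynomial R}
    (hp : ∀ i ∈ s, p.eval (v i) = 0) : Lagrange.nodal s v ∣ p :=
  Finset.prod_dvd_of_coprime
    (fun _ hi _ hj hij => Polynomial.isCoprime_X_sub_C_of_isUnit_sub (hs hi hj hij))
    fun i hi => Polynomial.dvd_iff_isRoot.mpr (hp i hi)

theorem eq_of_degree_lt_of_eval_eq_of_pairwise_isUnit_sub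
    (hs : (s : Set ι).Pairwise fun i j => IsUnit (v i - v j)) {p q : Polynomial R}
    (hp : p.degree < #s) (hq : q.degree < #s) (hpq : ∀ i ∈ s, p.eval (v i) = q.eval (v i)) :
    p = q := by
  nontriviality R
  by_contra hne
  have hdvd : Lagrange.nodal s v ∣ p - q :=
    nodal_dvd_of_pairwise_isUnit_sub hs fun i hi => by rw [Polynomial.eval_sub, hpq i hi, sub_self]
  refine Lagrange.nodal_monic.not_dvd_of_degree_lt (sub_ne_zero.mpr hne) ?_ hdvd
  rw [Lagrange.degree_nodal]
  exact (Polynomial.degree_sub_le p q).trans_lt (max_lt hp hq)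

theorem coeff_nodal {k : ℕ} (hk : k ≤ #s) :
    (Lagrange.nodal s v).coeff k = ∑ t ∈ s.powersetCard (#s - k), ∏ i ∈ t, -v i := by
  simp only [Lagrange.nodal_eq, sub_eq_add_neg, ← Polynomial.C_neg]
  exact s.prod_X_add_C_coeff (fun i => -v i) hk

variable [DecidableEq ι]

variable (s v) in
/-- The Lagrange basis polynomial at the node `v i`, over a commutative ring; Mathlib's
`Lagrange.basis` needs a field. The value is meaningful only if the differences `v i - v j` with
`j ∈ s`, `j ≠ i`, are units, as otherwise `Ring.inverse` is `0`. -/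
noncomputable def ringLagrangeBasis (i : ι) : Polynomial R :=
  Polynomial.C (Ring.inverse (∏ j ∈ s.erase i, (v i - v j))) * Lagrange.nodal (s.erase i) v

theorem degree_ringLagrangeBasis_lt {i : ι} (hi : i ∈ s) :
    (ringLagrangeBasis s v i).degree < #s := by
  nontriviality R
  calc (ringLagrangeBasis s v i).degree
      ≤ (Lagrange.nodal (s.erase i) v).degree := by
        rw [ringLagrangeBasis, ← Polynomial.smul_eq_C_mul]
        exact Polynomial.degree_smul_le _ _
    _ = #(s.erase i) := Lagrange.degree_nodal
    _ < #s := by exact_mod_cast card_erase_lt_of_mem hi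

theorem eval_ringLagrangeBasis_self {i : ι} (hi : IsUnit (∏ j ∈ s.erase i, (v i - v j))) :
    (ringLagrangeBasis s v i).eval (v i) = 1 := by
  rw [ringLagrangeBasis, Polynomial.eval_C_mul, Lagrange.eval_nodal, Ring.inverse_mul_cancel _ hi]

theorem eval_ringLagrangeBasis_of_ne {i j : ι} (hj : j ∈ s) (hij : j ≠ i) :
    (ringLagrangeBasis s v i).eval (v j) = 0 := by
  rw [ringLagrangeBasis, Polynomial.eval_C_mul,
    Lagrange.eval_nodal_at_node (mem_erase.mpr ⟨hij, hj⟩), mul_zero]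

theorem coeff_ringLagrangeBasis {i : ι} (hi : i ∈ s) {k : ℕ} (hk : k ≤ #s - 1) :
    (ringLagrangeBasis s v i).coeff k =
      (∑ t ∈ (s.erase i).powersetCard (#s - 1 - k), ∏ j ∈ t, -v j) *
        Ring.inverse (∏ j ∈ s.erase i, (v i - v j)) := by
  rw [← card_erase_of_mem hi] at hk ⊢
  rw [ringLagrangeBasis, Polynomial.coeff_C_mul, coeff_nodal hk, mul_comm]

theorem sum_eval_smul_ringLagrangeBasis
    (hs : ∀ i ∈ s, IsUnit (∏ j ∈ s.erase i, (v i - v j))) {p : Polynomial R}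
    (hp : p.degree < #s) :
    ∑ i ∈ s, p.eval (v i) • ringLagrangeBasis s v i = p := by
  have hpair : (s : Set ι).Pairwise fun i j => IsUnit (v i - v j) := fun i hi j hj hij =>
    IsUnit.prod_iff.mp (hs i hi) j (mem_erase.mpr ⟨hij.symm, hj⟩)
  refine eq_of_degree_lt_of_eval_eq_of_pairwise_isUnit_sub hpair ?_ hp fun i hi => ?_
  · exact Polynomial.mem_degreeLT.mp <| Submodule.sum_mem _ fun i hi =>
      Submodule.smul_mem _ _ <| Polynomial.mem_degreeLT.mpr <| degree_ringLagrangeBasis_lt hi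
  · rw [Polynomial.eval_finsetSum, sum_eq_single_of_mem i hi fun j _ hji => ?_]
    · rw [Polynomial.eval_smul, eval_ringLagrangeBasis_self (hs i hi), smul_eq_mul, mul_one]
    · rw [Polynomial.eval_smul, eval_ringLagrangeBasis_of_ne hi hji.symm, smul_zero]

theorem sum_coeff_ringLagrangeBasis_mul_pow
    (hs : ∀ i ∈ s, IsUnit (∏ j ∈ s.erase i, (v i - v j))) (e : ℕ) {k : ℕ} (hk : k < #s) :
    ∑ i ∈ s, (ringLagrangeBasis s v i).coeff e * v i ^ k = if k = e then 1 else 0 := by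
  have hdeg : (Polynomial.X ^ k : Polynomial R).degree < #s :=
    (Polynomial.degree_X_pow_le k).trans_lt (by exact_mod_cast hk)
  have hcoeff := congrArg (Polynomial.coeff · e) (sum_eval_smul_ringLagrangeBasis hs hdeg)
  simpa only [Polynomial.finsetSum_coeff, Polynomial.coeff_smul, Polynomial.eval_pow,
    Polynomial.eval_X, smul_eq_mul, mul_comm, Polynomial.coeff_X_pow, eq_comm] using hcoeff

end Interpolation

section ProductFunctional

variable {R σ : Type*} [CommSemiring R]

/-- `ε` is a `d`-leading multiindex of `P`: every monomial of `P` other than `X^ε` has, in some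
coordinate `j`, an exponent at most `d j` and different from `ε j`. As in the paper, `ε ≤ d` is
part of the notion. -/
def IsDLeading (d : σ → ℕ) (P : MvPolynomial σ R) (ε : σ →₀ ℕ) : Prop :=
  (∀ j, ε j ≤ d j) ∧ ∀ δ ∈ P.support, δ = ε ∨ ∃ j, δ j ≠ ε j ∧ δ j ≤ d j

variable [Fintype σ] [DecidableEq σ] {κ : σ → Type*} (s : ∀ j, Finset (κ j)) (v w : ∀ j, κ j → R)

theorem sum_piFinset_prod_mul_eval (P : MvPolynomial σ R) :
    ∑ x ∈ Fintype.piFinset s, (∏ j, w j (x j)) * eval (fun j => v j (x j)) P =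
      ∑ δ ∈ P.support, coeff δ P * ∏ j, ∑ i ∈ s j, w j i * v j i ^ δ j := by
  simp_rw [eval_eq', mul_sum]
  rw [sum_comm]
  simp_rw [prod_univ_sum, prod_mul_distrib, mul_sum, mul_left_comm]

theorem coeff_eq_sum_piFinset_of_isDLeading {d : σ → ℕ} {P : MvPolynomial σ R} {ε : σ →₀ ℕ}
    (hε : IsDLeading d P ε)
    (hw : ∀ j, ∀ k ≤ d j, ∑ i ∈ s j, w j i * v j i ^ k = if k = ε j then 1 else 0) :
    coeff ε P = ∑ x ∈ Fintype.piFinset s, (∏ j, w j (x j)) * eval (fun j => v j (x j)) P := by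
  obtain ⟨hεd, hlead⟩ := hε
  have hself : ∏ j, ∑ i ∈ s j, w j i * v j i ^ ε j = 1 :=
    prod_eq_one fun j _ => by rw [hw j _ (hεd j), if_pos rfl]
  have hother : ∀ δ ∈ P.support, δ ≠ ε → ∏ j, ∑ i ∈ s j, w j i * v j i ^ δ j = 0 := by
    intro δ hδ hne
    obtain ⟨j, hj, hjd⟩ := (hlead δ hδ).resolve_left hne
    exact prod_eq_zero (mem_univ j) (by rw [hw j _ hjd, if_neg hj])
  rw [sum_piFinset_prod_mul_eval, sum_eq_single ε]
  · rw [hself, mul_one]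
  · intro δ hδ hne
    rw [hother δ hδ hne, mul_zero]
  · intro h
    rw [notMem_support_iff.mp h, zero_mul]

end ProductFunctional

theorem isUnit_of_forall_piFinset_isUnit_prod {M σ : Type*} [CommMonoid M] [Fintype σ]
    [DecidableEq σ] {κ : σ → Type*} {s : ∀ j, Finset (κ j)} (hs : ∀ j, (s j).Nonempty)
    {f : ∀ j, κ j → M} (hf : ∀ x ∈ Fintype.piFinset s, IsUnit (∏ j, f j (x j)))
    {j : σ} {i : κ j} (hi : i ∈ s j) : IsUnit (f j i) := by
  classical
  rw [← Fintype.eval_image_piFinset s j fun j' _ => hs j'] at hi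
  obtain ⟨x, hx, rfl⟩ := mem_image.mp hi
  exact IsUnit.prod_univ_iff.mp (hf x hx) j

theorem ring_inverse_prod {M ι : Type*} [CommMonoidWithZero M] (s : Finset ι) (f : ι → M) :
    Ring.inverse (∏ i ∈ s, f i) = ∏ i ∈ s, Ring.inverse (f i) :=
  map_prod MonoidWithZero.inverse f s

theorem coeff_formula_d_leading_general {R σ : Type*} [CommRing R] [DecidableEq R] [Fintype σ]
    [DecidableEq σ] (X : σ → Finset R) (hX : ∀ j, (X j).Nonempty)
    (d : σ → ℕ) (hd : ∀ j, d j = #(X j) - 1)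
    (hN : ∀ x : σ → R, (∀ j, x j ∈ X j) → IsUnit (∏ j, ∏ z ∈ (X j).erase (x j), (x j - z)))
    (P : MvPolynomial σ R) (ε : σ →₀ ℕ) (hε : IsDLeading d P ε) :
    coeff ε P = ∑ x ∈ Fintype.piFinset X,
      (∏ j, ∑ Γ ∈ ((X j).erase (x j)).powersetCard (d j - ε j), ∏ γ ∈ Γ, (-γ)) *
        Ring.inverse (∏ j, ∏ z ∈ (X j).erase (x j), (x j - z)) * eval x P := by
  have hunit (j : σ) (a : R) (ha : a ∈ X j) : IsUnit (∏ z ∈ (X j).erase a, (a - z)) :=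
    isUnit_of_forall_piFinset_isUnit_prod (f := fun j a => ∏ z ∈ (X j).erase a, (a - z)) hX
      (fun x hx => hN x (Fintype.mem_piFinset.mp hx)) ha
  have hmoment (j : σ) (k : ℕ) (hk : k ≤ d j) :
      ∑ a ∈ X j, (ringLagrangeBasis (X j) id a).coeff (ε j) * a ^ k = if k = ε j then 1 else 0 :=
    sum_coeff_ringLagrangeBasis_mul_pow (hunit j) (ε j)
      (by have := hd j; have := (hX j).card_pos; omega)
  rw [coeff_eq_sum_piFinset_of_isDLeading X (fun _ => id) _ hε hmoment]
  refine sum_congr rfl fun x hx => congrArg (· * eval x P) ?_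
  rw [ring_inverse_prod, ← prod_mul_distrib]
  refine prod_congr rfl fun j _ => ?_
  rw [hd j]
  exact coeff_ringLagrangeBasis (Fintype.mem_piFinset.mp hx j) (hd j ▸ hε.1 j)

/-- Coefficient formula over a division grid, for a `d`-leading multiindex `ε` of `P`:
`P_ε = ∑_{x∈X} ψ_{ε,x} N(x)⁻¹ P(x)`. -/
theorem coeff_formula_d_leading {R : Type*} [CommRing R] [DecidableEq R] {n : ℕ}
    (X : Fin n → Finset R) (hX : ∀ j, (X j).Nonempty)
    (d : Fin n → ℕ) (hd : ∀ j, d j = (X j).card - 1)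
    (hN : ∀ x : Fin n → R, (∀ j, x j ∈ X j) →
      IsUnit (∏ j, ∏ z ∈ (X j).erase (x j), (x j - z)))
    (P : MvPolynomial (Fin n) R) (ε : Fin n → ℕ) (hε : ∀ j, ε j ≤ d j)
    (hlead : ∀ δ : Fin n →₀ ℕ, MvPolynomial.coeff δ P ≠ 0 →
      δ = Finsupp.equivFunOnFinite.symm ε ∨ ∃ j, δ j ≠ ε j ∧ δ j ≤ d j) :
    MvPolynomial.coeff (Finsupp.equivFunOnFinite.symm ε) P
      = ∑ x ∈ Fintype.piFinset X,
          (∏ j, ∑ Γ ∈ ((X j).erase (x j)).powersetCard (d j - ε j), ∏ γ ∈ Γ, (-γ))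
          * Ring.inverse (∏ j, ∏ z ∈ (X j).erase (x j), (x j - z))
          * MvPolynomial.eval x P :=
  coeff_formula_d_leading_general X hX d hd hN P (Finsupp.equivFunOnFinite.symm ε)
    ⟨hε, fun δ hδ => hlead δ (MvPolynomial.mem_support_iff.mp hδ)⟩
end

section
/- Let R be a commutative ring, A = (a_{ij}) ∈ R^{m×n}, b = (b_i) ∈ R^m, and let X = X_1 × ⋯ × X_n be a d-grid with N(x) a unit in R for every x ∈ X (e.g. any grid over a field). If m ≤ d_1 + ⋯ + d_n, then per_d(A) = Σ_{x ∈ X} N(x)^{−1} · ∏_{i=1}^m ( (Σ_{j=1}^n a_{ij} x_j) − b_i ), where d = (d_1,…,d_n). -/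
open MvPolynomial Finset

/-! On monomials, `P ↦ ∑ x, N(x)⁻¹ P(x)` factors into one-variable Lagrange sums, each of which
reads off the coefficient of degree `d j` as long as the exponent is at most `d j`. A monomial that
is not a multiple of `x ^ d` has some exponent below `d j`, which kills its product. So the sum is
the coefficient of `x ^ d` in `P` as soon as `P` has no monomial that is a proper multiple of
`x ^ d`. This holds for `P = ∏ i, ((A x) i - b i)`, whose degree is at most `∑ j, d j`; there the
constants `b i` do not affect the coefficient, which is `per_d(A)` by expanding `∏ i, (A x) i`. -/

section Interpolation

variable {R ι : Type*} [CommRing R] {s : Finset ι} {v : ι → R} {p : Polynomial R}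

theorem eq_zero_of_degree_lt_card_of_eval_eq_zero
    (hv : (s : Set ι).Pairwise fun i j ↦ IsUnit (v i - v j)) (hp : p.degree < #s)
    (hz : ∀ i ∈ s, p.eval (v i) = 0) : p = 0 := by
  nontriviality R
  have nodal_dvd : Lagrange.nodal s v ∣ p :=
    Finset.prod_dvd_of_coprime
      (fun i hi j hj hij ↦ Polynomial.isCoprime_X_sub_C_of_isUnit_sub (hv hi hj hij))
      fun i hi ↦ Polynomial.dvd_iff_isRoot.2 (hz i hi)
  by_contra hne
  exact Lagrange.nodal_monic.not_dvd_of_degree_lt hne (by rwa [Lagrange.degree_nodal]) nodal_dvd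

variable [DecidableEq ι]

theorem eq_sum_inverse_mul_eval_mul_nodal_erase
    (hv : (s : Set ι).Pairwise fun i j ↦ IsUnit (v i - v j)) (hp : p.degree < #s) :
    p = ∑ i ∈ s, Polynomial.C (Ring.inverse (∏ j ∈ s.erase i, (v i - v j)) * p.eval (v i)) *
      Lagrange.nodal (s.erase i) v := by
  nontriviality R
  rw [← sub_eq_zero]
  refine eq_zero_of_degree_lt_card_of_eval_eq_zero hv ?_ fun k hk ↦ ?_
  · refine (Polynomial.degree_sub_le _ _).trans_lt (max_lt hp ?_)
    refine (Polynomial.degree_sum_le _ _).trans_lt ?_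
    refine (Finset.sup_lt_iff (WithBot.bot_lt_coe _)).2 fun i hi ↦ ?_
    rw [← Polynomial.smul_eq_C_mul]
    refine (Polynomial.degree_smul_le _ _).trans_lt ?_
    rw [Lagrange.degree_nodal]
    exact_mod_cast Finset.card_erase_lt_of_mem hi
  · have unit : IsUnit (∏ j ∈ s.erase k, (v k - v j)) :=
      IsUnit.prod_iff.2 fun j hj ↦
        hv hk (mem_of_mem_erase hj) (ne_of_mem_erase hj).symm
    have other_terms : ∀ i ∈ s, i ≠ k → (Lagrange.nodal (s.erase i) v).eval (v k) = 0 :=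
      fun i _ hik ↦ Lagrange.eval_nodal_at_node (mem_erase.2 ⟨hik.symm, hk⟩)
    rw [Polynomial.eval_sub, Polynomial.eval_finsetSum, sum_eq_single_of_mem k hk
      fun i hi hik ↦ by rw [Polynomial.eval_mul, other_terms i hi hik, mul_zero],
      Polynomial.eval_mul, Polynomial.eval_C, Lagrange.eval_nodal, mul_right_comm,
      Ring.inverse_mul_cancel _ unit, one_mul, sub_self]

theorem coeff_card_sub_one_eq_sum_inverse_mul_eval
    (hv : (s : Set ι).Pairwise fun i j ↦ IsUnit (v i - v j)) (hp : p.degree < #s) :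
    p.coeff (#s - 1) = ∑ i ∈ s, Ring.inverse (∏ j ∈ s.erase i, (v i - v j)) * p.eval (v i) := by
  nontriviality R
  have leading : ∀ i ∈ s, (Lagrange.nodal (s.erase i) v).coeff (#s - 1) = 1 := fun i hi ↦ by
    rw [← card_erase_of_mem hi, ← Lagrange.natDegree_nodal (R := R) (v := v)]
    exact Lagrange.nodal_monic
  conv_lhs => rw [eq_sum_inverse_mul_eval_mul_nodal_erase hv hp, Polynomial.finsetSum_coeff]
  refine sum_congr rfl fun i hi ↦ ?_
  rw [Polynomial.coeff_C_mul, leading i hi, mul_one]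

end Interpolation

section Grid

variable {R κ : Type*} [CommRing R] [DecidableEq R] [Fintype κ]

/-- The product `N(x)` of the differences, coordinate by coordinate, between a point `x` and the
other values of the grid `∏ j, X j`. Its inverse is the interpolation weight of `x`. -/
def gridDiffProd (X : κ → Finset R) (x : κ → R) : R :=
  ∏ j, ∏ z ∈ (X j).erase (x j), (x j - z)

variable [DecidableEq κ] {X : κ → Finset R}

theorem pairwise_isUnit_sub_of_isUnit_gridDiffProd (hX : ∀ j, (X j).Nonempty)
    (hN : ∀ x ∈ Fintype.piFinset X, IsUnit (gridDiffProd X x)) (j : κ) :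
    (X j : Set R).Pairwise fun y z ↦ IsUnit (y - z) := by
  intro y hy z hz hyz
  obtain ⟨x, hx⟩ := Fintype.piFinset_nonempty.2 hX
  have mem_grid : Function.update x j y ∈ Fintype.piFinset X :=
    Fintype.mem_piFinset.2 <| (Function.forall_update_iff x fun i t ↦ t ∈ X i).2
      ⟨hy, fun i _ ↦ Fintype.mem_piFinset.1 hx i⟩
  have unit_factor := IsUnit.prod_univ_iff.1 (hN _ mem_grid) j
  rw [Function.update_self] at unit_factor
  exact IsUnit.prod_iff.1 unit_factor z (mem_erase.2 ⟨hyz.symm, hz⟩)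

theorem sum_inverse_gridDiffProd_mul_prod (X : κ → Finset R) (f : κ → R → R) :
    ∑ x ∈ Fintype.piFinset X, Ring.inverse (gridDiffProd X x) * ∏ j, f j (x j) =
      ∏ j, ∑ y ∈ X j, Ring.inverse (∏ z ∈ (X j).erase y, (y - z)) * f j y := by
  rw [prod_univ_sum]
  refine sum_congr rfl fun x _ ↦ ?_
  rw [prod_mul_distrib]
  congr 1
  exact map_prod MonoidWithZero.inverse _ _

theorem sum_inverse_gridDiffProd_mul_prod_pow {δ e : κ →₀ ℕ} (hcard : ∀ j, #(X j) = δ j + 1)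
    (hX : ∀ j, (X j : Set R).Pairwise fun y z ↦ IsUnit (y - z)) (he : δ ≤ e → e = δ) :
    ∑ x ∈ Fintype.piFinset X, Ring.inverse (gridDiffProd X x) * ∏ j, x j ^ e j =
      if e = δ then 1 else 0 := by
  nontriviality R
  have factor : ∀ j, e j ≤ δ j →
      ∑ y ∈ X j, Ring.inverse (∏ z ∈ (X j).erase y, (y - z)) * y ^ e j =
        if e j = δ j then 1 else 0 := fun j hj ↦ by
    have degree_lt : (Polynomial.X ^ e j : Polynomial R).degree < #(X j) := by
      rw [Polynomial.degree_X_pow, hcard]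
      exact_mod_cast Nat.lt_succ_of_le hj
    have key := coeff_card_sub_one_eq_sum_inverse_mul_eval (v := id) (hX j) degree_lt
    simpa [hcard, Polynomial.coeff_X_pow, eq_comm] using key.symm
  rw [sum_inverse_gridDiffProd_mul_prod X fun j y ↦ y ^ e j]
  split_ifs with h
  · subst h
    exact prod_eq_one fun j _ ↦ by rw [factor j le_rfl, if_pos rfl]
  · obtain ⟨j, hj⟩ : ∃ j, e j < δ j := by
      by_contra! hle
      exact h (he hle)
    exact prod_eq_zero (mem_univ j) (by rw [factor j hj.le, if_neg hj.ne])

theorem coeff_eq_sum_inverse_gridDiffProd_mul_eval {δ : κ →₀ ℕ} (hcard : ∀ j, #(X j) = δ j + 1)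
    (hX : ∀ j, (X j : Set R).Pairwise fun y z ↦ IsUnit (y - z)) {P : MvPolynomial κ R}
    (hP : ∀ e ∈ P.support, δ ≤ e → e = δ) :
    coeff δ P = ∑ x ∈ Fintype.piFinset X, Ring.inverse (gridDiffProd X x) * eval x P := by
  symm
  calc
    ∑ x ∈ Fintype.piFinset X, Ring.inverse (gridDiffProd X x) * eval x P
    _ = ∑ e ∈ P.support, coeff e P *
          ∑ x ∈ Fintype.piFinset X, Ring.inverse (gridDiffProd X x) * ∏ j, x j ^ e j := by
        simp_rw [eval_eq', mul_sum]
        rw [sum_comm]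
        simp_rw [mul_left_comm]
    _ = ∑ e ∈ P.support, coeff e P * if e = δ then 1 else 0 :=
        sum_congr rfl fun e he ↦ by
          rw [sum_inverse_gridDiffProd_mul_prod_pow hcard hX (hP e he)]
    _ = coeff δ P := by simp [eq_comm]

end Grid

section Permanent

theorem coeff_prod_sub_C_of_isHomogeneous_one {R ι κ : Type*} [CommRing R] {s : Finset ι}
    {L : ι → MvPolynomial κ R} (hL : ∀ i ∈ s, (L i).IsHomogeneous 1) (b : ι → R) {δ : κ →₀ ℕ}
    (hδ : #s ≤ δ.degree) :
    coeff δ (∏ i ∈ s, (L i - C (b i))) = coeff δ (∏ i ∈ s, L i) := by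
  classical
  have coeff_term : ∀ t ∈ s.powerset, t ≠ s →
      coeff δ ((∏ i ∈ t, L i) * ∏ i ∈ s \ t, -C (b i)) = 0 := by
    intro t ht hts
    have ht := mem_powerset.1 ht
    have hom : (∏ i ∈ t, L i).IsHomogeneous #t := by
      simpa using IsHomogeneous.prod t L (fun _ ↦ 1) fun i hi ↦ hL i (ht hi)
    have card_lt : #t < δ.degree := (card_lt_card (ht.ssubset_of_ne hts)).trans_le hδ
    simp_rw [← C_neg, ← map_prod]
    rw [mul_comm, coeff_C_mul, hom.coeff_eq_zero card_lt.ne', mul_zero]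
  simp_rw [sub_eq_add_neg]
  rw [prod_add, coeff_sum, sum_eq_single_of_mem s (mem_powerset_self s) coeff_term, sdiff_self,
    bot_eq_empty, prod_empty, mul_one]

theorem totalDegree_prod_sub_C_le_card {R ι κ : Type*} [CommRing R] {s : Finset ι}
    {L : ι → MvPolynomial κ R} (hL : ∀ i ∈ s, (L i).totalDegree ≤ 1) (b : ι → R) :
    (∏ i ∈ s, (L i - C (b i))).totalDegree ≤ #s := by
  rw [card_eq_sum_ones]
  exact (totalDegree_finsetProd _ _).trans <|
    sum_le_sum fun i hi ↦ (totalDegree_sub_C_le _ _).trans (hL i hi)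

theorem finsupp_eq_of_le_of_degree_le {κ : Type*} {δ e : κ →₀ ℕ} (hle : δ ≤ e)
    (hdeg : e.degree ≤ δ.degree) : e = δ := by
  have degree_add : (e - δ).degree + δ.degree = e.degree := by
    rw [← map_add, tsub_add_cancel_of_le hle]
  have degree_zero : (e - δ).degree = 0 := by omega
  exact le_antisymm (tsub_eq_zero_iff_le.1 ((Finsupp.degree_eq_zero_iff _).1 degree_zero)) hle

variable {R ι κ : Type*} [CommRing R] [Fintype ι] [DecidableEq ι] [Fintype κ] [DecidableEq κ]

/-- The permanent `per_δ(A)`, in which each row picks a column and column `j` is picked exactly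
`δ j` times. When `∑ j, δ j` is the number of rows, `∏ j, (δ j)!` times this is the ordinary
permanent of the square matrix in which column `j` of `A` is repeated `δ j` times. -/
def columnPermanent (A : Matrix ι κ R) (δ : κ → ℕ) : R :=
  ∑ σ : ι → κ with ∀ j, #{i | σ i = j} = δ j, ∏ i, A i (σ i)

theorem coeff_prod_toMvPolynomial (A : Matrix ι κ R) (δ : κ →₀ ℕ) :
    coeff δ (∏ i, A.toMvPolynomial i) = columnPermanent A δ := by
  have fiber_card : ∀ (σ : ι → κ) j,
      (∑ i, Finsupp.single (σ i) 1 : κ →₀ ℕ) j = #{i | σ i = j} := fun σ j ↦ by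
    simp [Finsupp.finsetSum_apply, Finsupp.single_apply]
  simp_rw [Matrix.toMvPolynomial, prod_univ_sum, Fintype.piFinset_univ, ← monomial_sum_prod]
  simp_rw [coeff_sum, coeff_monomial, ← sum_filter, Finsupp.ext_iff, fiber_card]
  rfl

theorem permanent_formula_general [DecidableEq R] (A : Matrix ι κ R) (b : ι → R)
    {X : κ → Finset R} {d : κ → ℕ} (hd : ∀ j, #(X j) = d j + 1)
    (hN : ∀ x ∈ Fintype.piFinset X, IsUnit (gridDiffProd X x)) (hm : Fintype.card ι ≤ ∑ j, d j) :
    columnPermanent A d =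
      ∑ x ∈ Fintype.piFinset X, Ring.inverse (gridDiffProd X x) * ∏ i, (A.mulVec x i - b i) := by
  let δ : κ →₀ ℕ := Finsupp.equivFunOnFinite.symm d
  let P : MvPolynomial κ R := ∏ i, (A.toMvPolynomial i - C (b i))
  have card_le : Fintype.card ι ≤ δ.degree := hm.trans_eq δ.degree_eq_sum.symm
  have maximal : ∀ e ∈ P.support, δ ≤ e → e = δ := fun e he hle ↦
    finsupp_eq_of_le_of_degree_le hle <| calc
      e.degree ≤ P.totalDegree := le_totalDegree he
      _ ≤ Fintype.card ι :=
        totalDegree_prod_sub_C_le_card (fun i _ ↦ A.toMvPolynomial_totalDegree_le i) b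
      _ ≤ δ.degree := card_le
  calc columnPermanent A d
    _ = coeff δ (∏ i, A.toMvPolynomial i) := (coeff_prod_toMvPolynomial A δ).symm
    _ = coeff δ P := (coeff_prod_sub_C_of_isHomogeneous_one
          (fun i _ ↦ A.toMvPolynomial_isHomogeneous i) b card_le).symm
    _ = ∑ x ∈ Fintype.piFinset X, Ring.inverse (gridDiffProd X x) * eval x P :=
        coeff_eq_sum_inverse_gridDiffProd_mul_eval hd
          (pairwise_isUnit_sub_of_isUnit_gridDiffProd (fun j ↦ card_pos.1 (by grind)) hN) maximal
    _ = _ := by simp [P, Matrix.toMvPolynomial_eval_eq_apply]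

end Permanent

/-- Permanent formula: over a division grid with `m ≤ Σ d_j`,
`per_d(A) = ∑_{x ∈ X} N(x)⁻¹ ∏_i ((Ax)_i − b_i)`. -/
theorem permanent_formula {R : Type*} [CommRing R] [DecidableEq R] {m n : ℕ}
    (A : Fin m → Fin n → R) (b : Fin m → R)
    (X : Fin n → Finset R) (hX : ∀ j, (X j).Nonempty)
    (d : Fin n → ℕ) (hd : ∀ j, d j = (X j).card - 1)
    (hN : ∀ x : Fin n → R, (∀ j, x j ∈ X j) →
      IsUnit (∏ j, ∏ z ∈ (X j).erase (x j), (x j - z)))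
    (hm : m ≤ ∑ j, d j) :
    ∑ σ ∈ (Finset.univ : Finset (Fin m → Fin n)).filter
        (fun σ => ∀ j, (Finset.univ.filter (fun i => σ i = j)).card = d j),
        ∏ i, A i (σ i)
      = ∑ x ∈ Fintype.piFinset X,
          Ring.inverse (∏ j, ∏ z ∈ (X j).erase (x j), (x j - z))
          * ∏ i, ((∑ j, A i j * x j) - b i) := by
  have card_eq : ∀ j, #(X j) = d j + 1 := fun j ↦ by have := (hX j).card_pos; grind
  calc
    _ = columnPermanent (Matrix.of A) d := by rw [columnPermanent]; congr!
    _ = _ := permanent_formula_general (Matrix.of A) b card_eq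
      (fun x hx ↦ hN x (Fintype.mem_piFinset.1 hx)) ((Fintype.card_fin m).trans_le hm)
end

section
/- Let R be a commutative ring with 1 ≠ 0 and X = X_1 × ⋯ × X_n an integral grid (for all j, differences of distinct elements of X_j are non-zero-divisors; e.g. R an integral domain), and set L_j := ∏_{x̂ ∈ X_j} (X_j − x̂) ∈ R[X_1,…,X_n]. Then for any P ∈ R[X_1,…,X_n] the following are equivalent: (i) P(x) = 0 for all x ∈ X; (ii) there exist polynomials H_1,…,H_n ∈ R[X_1,…,X_n] with deg(H_j) ≤ deg(P) − |X_j| for each j such that P = Σ_{j=1}^n H_j · L_j. -/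
open MvPolynomial Finset

/-!
Dividing `P` by the monic polynomials `L_j` with respect to a degree-compatible monomial order gives
`P = ∑ H_j L_j + r`, where `deg H_j + |X_j| ≤ deg P` and `r` has degree less than `|X_j|` in each
variable. If `P` vanishes on the grid, then so does `r`, and specialising all variables but one
turns this into the vanishing of a univariate polynomial with more roots than its degree. Although
such a polynomial need not be zero over an arbitrary ring, here it is: evaluating a quotient by
`∏_{x ∈ S} (X - x)` at a new root `a` only requires cancelling `∏_{x ∈ S} (a - x)`.
-/

section Grid

variable {R σ : Type*} [CommRing R]

theorem prod_X_sub_C_dvd_of_pairwise_sub_mem_nonZeroDivisors {S : Finset R}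
    (hS : (S : Set R).Pairwise fun x w ↦ x - w ∈ nonZeroDivisors R) {f : Polynomial R}
    (hf : ∀ x ∈ S, f.IsRoot x) : ∏ x ∈ S, (Polynomial.X - Polynomial.C x) ∣ f := by
  classical
  induction S using Finset.induction_on with
  | empty => simp
  | insert a S ha ih =>
    obtain ⟨g, rfl⟩ := ih (hS.mono (by simp)) fun x hx ↦ hf x (mem_insert_of_mem hx)
    have hprod : ∏ x ∈ S, (a - x) ∈ nonZeroDivisors R :=
      prod_mem_nonZeroDivisors_of_mem_nonZeroDivisors fun x hx ↦
        hS (by simp) (by simp [hx]) (ne_of_mem_of_not_mem hx ha).symm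
    have hroot : (∏ x ∈ S, (a - x)) * g.eval a = 0 := by
      simpa [Polynomial.eval_prod] using hf a (mem_insert_self a S)
    have hg : g.IsRoot a := (mul_left_mem_nonZeroDivisors_eq_zero_iff hprod).mp hroot
    rw [prod_insert ha, mul_comm]
    exact mul_dvd_mul_left _ (Polynomial.dvd_iff_isRoot.mpr hg)

theorem eq_zero_of_natDegree_lt_card_of_pairwise_sub_mem_nonZeroDivisors {S : Finset R}
    (hS : (S : Set R).Pairwise fun x w ↦ x - w ∈ nonZeroDivisors R) {f : Polynomial R}
    (hf : ∀ x ∈ S, f.IsRoot x) (hdeg : f.natDegree < #S) : f = 0 := by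
  nontriviality R
  by_contra hne
  refine (Polynomial.monic_prod_X_sub_C id S).not_dvd_of_natDegree_lt hne ?_
    (prod_X_sub_C_dvd_of_pairwise_sub_mem_nonZeroDivisors hS hf)
  rwa [Polynomial.natDegree_finsetProd_X_sub_C_eq_card]

/-- Integrality of the grid `∏ j, X j`: differences of distinct elements of the same side `X j`
are not zero divisors. The sides may be empty and there may be infinitely many of them. -/
def IsIntegralGrid (X : σ → Finset R) : Prop :=
  ∀ j, (X j : Set R).Pairwise fun x w ↦ x - w ∈ nonZeroDivisors R

namespace IsIntegralGrid

theorem comp {τ : Type*} {X : σ → Finset R} (hX : IsIntegralGrid X) (f : τ → σ) :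
    IsIntegralGrid (X ∘ f) :=
  fun j ↦ hX (f j)

theorem eq_zero_of_eval_eq_zero_fin {n : ℕ} {X : Fin n → Finset R} (hX : IsIntegralGrid X)
    {P : MvPolynomial (Fin n) R} (hdeg : ∀ j, P.degreeOf j < #(X j))
    (hP : ∀ x : Fin n → R, (∀ j, x j ∈ X j) → eval x P = 0) : P = 0 := by
  induction n with
  | zero =>
    rw [eq_C_of_isEmpty P] at hP ⊢
    simpa using hP 0
  | succ n ih =>
    have hslice (x : Fin n → R) (hx : ∀ j, x j ∈ X j.succ) :
        (finSuccEquiv R n P).map (eval x) = 0 := by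
      refine eq_zero_of_natDegree_lt_card_of_pairwise_sub_mem_nonZeroDivisors (hX 0)
        (fun y hy ↦ ?_) ?_
      · rw [Polynomial.IsRoot, ← eval_eq_eval_mv_eval']
        exact hP _ (Fin.cases hy hx)
      · exact Polynomial.natDegree_map_le.trans_lt (natDegree_finSuccEquiv P ▸ hdeg 0)
    have hcoeff (i : ℕ) : (finSuccEquiv R n P).coeff i = 0 := by
      refine ih (hX.comp Fin.succ)
        (fun j ↦ (degreeOf_coeff_finSuccEquiv P j i).trans_lt (hdeg j.succ)) fun x hx ↦ ?_
      rw [← Polynomial.coeff_map, hslice x hx, Polynomial.coeff_zero]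
    exact (map_eq_zero_iff _ (finSuccEquiv R n).injective).mp (Polynomial.ext hcoeff)

theorem eq_zero_of_eval_eq_zero {X : σ → Finset R} (hX : IsIntegralGrid X)
    {P : MvPolynomial σ R} (hdeg : ∀ j, P.degreeOf j < #(X j))
    (hP : ∀ x : σ → R, (∀ j, x j ∈ X j) → eval x P = 0) : P = 0 := by
  obtain ⟨n, f, hf, Q, rfl⟩ := exists_fin_rename P
  choose y hy using fun j ↦ card_pos.mp (hdeg j).pos
  suffices hQ : Q = 0 by rw [hQ, map_zero]
  refine (hX.comp f).eq_zero_of_eval_eq_zero_fin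
    (fun i ↦ (degreeOf_rename_of_injective hf i).symm.trans_lt (hdeg (f i))) fun x hx ↦ ?_
  have hextend (j : σ) : Function.extend f x y j ∈ X j := by
    by_cases hj : ∃ i, f i = j
    · obtain ⟨i, rfl⟩ := hj
      exact hf.extend_apply x y i ▸ hx i
    · exact Function.extend_apply' x y j hj ▸ hy j
  simpa only [eval_rename, Function.extend_comp hf] using hP _ hextend

end IsIntegralGrid

/-- The polynomial `L_j = ∏_{z ∈ S} (X_j - z)` attached to the side `S = X_j` of a grid, as a
polynomial in all the variables. -/
noncomputable def gridPoly (S : Finset R) (j : σ) : MvPolynomial σ R :=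
  ∏ z ∈ S, (MvPolynomial.X j - MvPolynomial.C z)

theorem eval_gridPoly_eq_zero {S : Finset R} {j : σ} {x : σ → R} (hx : x j ∈ S) :
    eval x (gridPoly S j) = 0 := by
  rw [gridPoly, map_prod]
  exact prod_eq_zero hx (by simp)

theorem eval_sum_mul_gridPoly_eq_zero {X : σ → Finset R} (H : σ →₀ MvPolynomial σ R) {x : σ → R}
    (hx : ∀ j, x j ∈ X j) : eval x (H.sum fun j h ↦ h * gridPoly (X j) j) = 0 := by
  rw [map_finsuppSum]
  exact sum_eq_zero fun j _ ↦ by simp only [map_mul, eval_gridPoly_eq_zero (hx j), mul_zero]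

theorem monic_gridPoly (m : MonomialOrder σ) (S : Finset R) (j : σ) : m.Monic (gridPoly S j) :=
  MonomialOrder.Monic.prod fun z _ ↦ m.monic_X_sub_C j z

theorem degree_gridPoly [Nontrivial R] (m : MonomialOrder σ) (S : Finset R) (j : σ) :
    m.degree (gridPoly S j) = Finsupp.single j #S := by
  have hregular : ∀ z ∈ S, IsRegular (m.leadingCoeff (MvPolynomial.X j - MvPolynomial.C z)) :=
    fun z _ ↦ (m.monic_X_sub_C j z).leadingCoeff_eq_one ▸ isRegular_one
  simp [gridPoly, MonomialOrder.degree_prod_of_regular hregular, m.degree_X_sub_C]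

theorem totalDegree_mul_gridPoly {H : MvPolynomial σ R} (hH : H ≠ 0) (S : Finset R) (j : σ) :
    (H * gridPoly S j).totalDegree = H.totalDegree + #S := by
  have : Nontrivial (MvPolynomial σ R) := nontrivial_of_ne H 0 hH
  have : Nontrivial R := Module.nontrivial R (MvPolynomial σ R)
  obtain ⟨_, _⟩ := exists_wellFoundedGT σ
  have hregular : IsRegular (MonomialOrder.degLex.leadingCoeff (gridPoly S j)) :=
    (monic_gridPoly _ S j).leadingCoeff_eq_one ▸ isRegular_one
  rw [← degree_degLexDegree, MonomialOrder.degree_mul_of_isRegular_right hH hregular,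
    degree_gridPoly, map_add, degree_degLexDegree, Finsupp.degree_single]

theorem exists_eq_sum_mul_gridPoly_add (X : σ → Finset R) (P : MvPolynomial σ R) :
    ∃ (H : σ →₀ MvPolynomial σ R) (r : MvPolynomial σ R),
      P = (H.sum fun j h ↦ h * gridPoly (X j) j) + r ∧
      (∀ j, H j = 0 ∨ (H j).totalDegree + #(X j) ≤ P.totalDegree) ∧
      (r = 0 ∨ ∀ j, r.degreeOf j < #(X j)) := by
  obtain ⟨_, _⟩ := exists_wellFoundedGT σ
  obtain ⟨H, r, hP, hH, hr⟩ := MonomialOrder.degLex.div (b := fun j ↦ gridPoly (X j) j)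
    (fun j ↦ (monic_gridPoly _ (X j) j).leadingCoeff_eq_one ▸ isUnit_one) P
  refine ⟨H, r, hP, fun j ↦ or_iff_not_imp_left.mpr fun hj ↦ ?_,
    or_iff_not_imp_left.mpr fun hr0 j ↦ ?_⟩
  · rw [← totalDegree_mul_gridPoly hj, mul_comm]
    exact degLex_totalDegree_monotone (hH j)
  · have : Nontrivial (MvPolynomial σ R) := nontrivial_of_ne r 0 hr0
    have : Nontrivial R := Module.nontrivial R (MvPolynomial σ R)
    have hlt (m : σ →₀ ℕ) (hm : m ∈ r.support) : m j < #(X j) := by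
      simpa [degree_gridPoly] using hr m hm j
    obtain ⟨m, hm⟩ := support_nonempty.mpr hr0
    exact (degreeOf_lt_iff (hlt m hm).pos).mpr hlt

theorem combinatorial_nullstellensatz_general {X : σ → Finset R} (hX : IsIntegralGrid X)
    (P : MvPolynomial σ R) :
    (∀ x : σ → R, (∀ j, x j ∈ X j) → eval x P = 0) ↔
      ∃ H : σ →₀ MvPolynomial σ R,
        (∀ j, H j = 0 ∨ (H j).totalDegree + #(X j) ≤ P.totalDegree) ∧
        P = H.sum fun j h ↦ h * gridPoly (X j) j := by
  refine ⟨fun hP ↦ ?_, ?_⟩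
  · obtain ⟨H, r, hdiv, hH, hr⟩ := exists_eq_sum_mul_gridPoly_add X P
    have hr_eval (x : σ → R) (hx : ∀ j, x j ∈ X j) : eval x r = 0 := by
      simpa only [hdiv, map_add, eval_sum_mul_gridPoly_eq_zero H hx, zero_add] using hP x hx
    have hr_zero : r = 0 := hr.elim id fun hdeg ↦ hX.eq_zero_of_eval_eq_zero hdeg hr_eval
    exact ⟨H, hH, by rwa [hr_zero, add_zero] at hdiv⟩
  · rintro ⟨H, -, rfl⟩ x hx
    exact eval_sum_mul_gridPoly_eq_zero H hx

end Grid

/-- Combinatorial Nullstellensatz: over an integral grid, `P` vanishes on the whole grid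
iff `P = ∑_j H_j L_j` with `deg(H_j) ≤ deg(P) − |X_j|`
(where `L_j = ∏_{z ∈ X_j}(X_j − z)`). -/
theorem combinatorial_nullstellensatz {R : Type*} [CommRing R] [Nontrivial R] {n : ℕ}
    (X : Fin n → Finset R) (hX : ∀ j, (X j).Nonempty)
    (hint : ∀ j, ∀ x ∈ X j, ∀ w ∈ X j, x ≠ w → x - w ∈ nonZeroDivisors R)
    (P : MvPolynomial (Fin n) R) :
    (∀ x : Fin n → R, (∀ j, x j ∈ X j) → MvPolynomial.eval x P = 0)
    ↔ ∃ H : Fin n → MvPolynomial (Fin n) R,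
        (∀ j, H j = 0 ∨ (H j).totalDegree + (X j).card ≤ P.totalDegree)
        ∧ P = ∑ j, H j * ∏ z ∈ X j, (MvPolynomial.X j - MvPolynomial.C z) := by
  rw [combinatorial_nullstellensatz_general hint, Finsupp.equivFunOnFinite.exists_congr_left]
  simp [Finsupp.sum_fintype, gridPoly]
end
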